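/- Fix s ∈ (1/2, 1) and a cutoff η as in the definition of I_N. There is a constant C > 0 (depending only on s, η) such that for every N ≥ 1 and every Schwartz function g : ℝ³ → ℂ, E(I_N g) ≤ C ( N^{2(1−s)} ‖g‖²_{Ḣ^s(ℝ³)} + ‖g‖⁴_{L⁴(ℝ³)} ). -/

import Mathlib

open MeasureTheory Real Complex Filter
open scoped FourierTransform ContDiff ENNReal

noncomputable section

abbrev E3 := EuclideanSpace ℝ (Fin 3)

/-- the `i`-th standard basis vector of `ℝ³`. -/
def e3 (i : Fin 3) : E3 := EuclideanSpace.single i (1 : ℝ)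

/-- the `i`-th spatial partial derivative. -/
def pd (g : E3 → ℂ) (i : Fin 3) (x : E3) : ℂ := fderiv ℝ g x (e3 i)

/-- the (spatial) Laplacian. -/
def lap (g : E3 → ℂ) (x : E3) : ℂ := ∑ i : Fin 3, fderiv ℝ (fun y => pd g i y) x (e3 i)

/-- the antiderivative `F(z) = ∫₀^z f(s) ds` of `f`. -/
def Fa (f : ℝ → ℝ) (z : ℝ) : ℝ := ∫ s in (0:ℝ)..z, f s

/-- `u` is a smooth decaying solution of the gNLS `i ∂ₜ u + α Δ u = μ f(|u|²) u`
on `[0,T] × ℝ³`: it is jointly smooth, every time derivative slice is a Schwartz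
function of `x`, and the equation holds pointwise on `[0,T] × ℝ³`. -/
structure IsSolution (α μ : ℝ) (f : ℝ → ℝ) (T : ℝ) (u : ℝ → E3 → ℂ) : Prop where
  smooth : ContDiff ℝ ∞ (fun p : ℝ × E3 => u p.1 p.2)
  schwartz : ∀ (k : ℕ) (t : ℝ), ∃ g : SchwartzMap E3 ℂ,
      ∀ x, iteratedDeriv k (fun s => u s x) t = g x
  eqn : ∀ t ∈ Set.Icc (0:ℝ) T, ∀ x : E3,
      Complex.I * deriv (fun s => u s x) t + (α : ℂ) * lap (u t) x
        = ((μ * f (Complex.normSq (u t x)) : ℝ) : ℂ) * u t x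

/-- the `i`-th component of the mass current `Im (conj u ∇u)`. -/
def massCur (g : E3 → ℂ) (i : Fin 3) (x : E3) : ℝ := ((starRingEnd ℂ) (g x) * pd g i x).im

/-- the Morawetz action centered at `y`. -/
def morAction (g : E3 → ℂ) (y : E3) : ℝ :=
  ∫ x : E3, ∑ i : Fin 3, massCur g i x * ((x i - y i) / ‖x - y‖)

/-- `|∇̸_y g(x)|²`, the squared norm of the angular part of the gradient. -/
def angGradSq (g : E3 → ℂ) (y x : E3) : ℝ :=
  ∑ i : Fin 3, Complex.normSq (pd g i x -
    (((x i - y i) / ‖x - y‖ : ℝ) : ℂ) *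
      ∑ j : Fin 3, (((x j - y j) / ‖x - y‖ : ℝ) : ℂ) * pd g j x)

/-- squared homogeneous Sobolev norm `‖g‖²_{Ḣ^σ}`. -/
def sobSq (σ : ℝ) (g : E3 → ℂ) : ℝ := ∫ ξ : E3, ‖ξ‖ ^ (2 * σ) * ‖𝓕 g ξ‖ ^ 2


/-- `η` is an admissible cutoff for the smoothing operator `I_N` at regularity `s`:
a smooth nonincreasing function on `[0,∞)` with values in `(0,1]`, equal to `1` for
`r ≤ 1` and to `r^{s−1}` for `r ≥ 2`. -/
def IsCutoff (s : ℝ) (η : ℝ → ℝ) : Prop :=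
  ContDiff ℝ ∞ η ∧ AntitoneOn η (Set.Ici 0) ∧ (∀ r ≥ (0:ℝ), 0 < η r ∧ η r ≤ 1) ∧
    (∀ r ≤ (1:ℝ), η r = 1) ∧ (∀ r ≥ (2:ℝ), η r = r ^ (s - 1))

/-- the smoothing operator `I_N`, a Fourier multiplier with symbol `η(|ξ|/N)`. -/
def Iop (η : ℝ → ℝ) (N : ℝ) (g : E3 → ℂ) : E3 → ℂ :=
  fun x => 𝓕⁻ (fun ξ : E3 => (η (‖ξ‖ / N) : ℂ) * 𝓕 g ξ) x

/-- the Littlewood–Paley type projection `P_M`, a Fourier multiplier with symbol `ψ(ξ/M)`. -/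
def PM (ψ : E3 → ℝ) (M : ℝ) (g : E3 → ℂ) : E3 → ℂ :=
  fun x => 𝓕⁻ (fun ξ : E3 => (ψ (M⁻¹ • ξ) : ℂ) * 𝓕 g ξ) x

/-- pointwise norm `|∇g(x)|` of the spatial gradient. -/
def gradNorm (g : E3 → ℂ) (x : E3) : ℝ := Real.sqrt (∑ i : Fin 3, Complex.normSq (pd g i x))

/-- `(q,r)` is a Schrödinger admissible pair for `ℝ^{3+1}`: `q, r ≥ 2` and
`1/q + 3/(2r) = 3/4`. -/
def SAdmissible (q r : ℝ≥0∞) : Prop := 2 ≤ q ∧ 2 ≤ r ∧ 1 / q + 3 / (2 * r) = 3 / 4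

/-- the mixed spacetime norm `‖G‖_{L^q_t L^r_x([0,T] × ℝ³)}` (of a scalar function). -/
def LqLr (q r : ℝ≥0∞) (T : ℝ) (G : ℝ → E3 → ℝ) : ℝ≥0∞ :=
  eLpNorm (fun t => (eLpNorm (G t) r volume).toReal) q (volume.restrict (Set.Icc (0:ℝ) T))

/-- `Z = sup_{(q,r) admissible} ‖∇ I_N φ‖_{L^q_t L^r_x([0,T] × ℝ³)}`. -/
def Znorm (η : ℝ → ℝ) (N T : ℝ) (φ : ℝ → E3 → ℂ) : ℝ≥0∞ :=
  ⨆ (q : ℝ≥0∞) (r : ℝ≥0∞) (_ : SAdmissible q r),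
    LqLr q r T (fun t x => gradNorm (Iop η N (φ t)) x)

/-- the modified energy `E(w) = ∫ (1/2)|∇w|² + (1/4)|w|⁴ dx`. -/
def energyE (w : E3 → ℂ) : ℝ :=
  ∫ x : E3, (1/2) * (∑ i : Fin 3, Complex.normSq (pd w i x)) + (1/4) * ‖w x‖ ^ 4

/-- squared inhomogeneous Sobolev norm `‖g‖²_{H^s}`. -/
def inhomSobSq (s : ℝ) (g : E3 → ℂ) : ℝ :=
  ∫ ξ : E3, (1 + ‖ξ‖ ^ 2) ^ s * ‖𝓕 g ξ‖ ^ 2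


/-- Jensen/Hölder plus Tonelli: Young's inequality `L¹ * L⁴ → L⁴`. -/
lemma young4 (k g : E3 → ℝ≥0∞) (hk : Measurable k) (hg : Measurable g) :
    ∫⁻ x, (∫⁻ t, k t * g (x - t)) ^ 4 ≤ (∫⁻ t, k t) ^ 4 * ∫⁻ x, g x ^ 4 := by
  have h1 : ∀ x : E3, (∫⁻ t, k t * g (x - t)) ^ 4 ≤
      (∫⁻ t, k t) ^ 3 * ∫⁻ t, k t * g (x - t) ^ 4 := by
    intro x
    have hgx : Measurable fun t => g (x - t) := hg.comp (measurable_const.sub measurable_id)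
    have := ENNReal.lintegral_mul_norm_pow_le (μ := (volume : Measure E3)) (f := k)
      (g := fun t => k t * g (x - t) ^ 4) hk.aemeasurable
      (hk.mul (hgx.pow_const 4)).aemeasurable
      (p := 3/4) (q := 1/4) (by norm_num) (by norm_num) (by norm_num)
    have e : ∀ t, k t ^ (3/4:ℝ) * (k t * g (x - t) ^ 4) ^ (1/4:ℝ) = k t * g (x - t) := by
      intro t
      rw [ENNReal.mul_rpow_of_nonneg _ _ (by norm_num), ← mul_assoc,
        ← ENNReal.rpow_add_of_nonneg _ _ (by norm_num) (by norm_num),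
        ← ENNReal.rpow_natCast, ← ENNReal.rpow_mul]
      norm_num
    simp_rw [e] at this
    calc _ ≤ ((∫⁻ t, k t) ^ (3/4:ℝ) * (∫⁻ t, k t * g (x - t) ^ 4) ^ (1/4:ℝ)) ^ 4 := by gcongr
      _ = _ := by
        rw [mul_pow, ← ENNReal.rpow_natCast, ← ENNReal.rpow_natCast, ← ENNReal.rpow_mul,
          ← ENNReal.rpow_mul]
        norm_num
  calc _ ≤ ∫⁻ x, (∫⁻ t, k t) ^ 3 * ∫⁻ t, k t * g (x - t) ^ 4 := lintegral_mono h1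
    _ = (∫⁻ t, k t) ^ 3 * ∫⁻ x, ∫⁻ t, k t * g (x - t) ^ 4 := by
      rw [lintegral_const_mul]
      apply Measurable.lintegral_prod_right'
        (f := fun p : E3 × E3 => k p.2 * g (p.1 - p.2) ^ 4)
      exact (hk.comp measurable_snd).mul ((hg.comp (measurable_fst.sub measurable_snd)).pow_const 4)
    _ = (∫⁻ t, k t) ^ 3 * ∫⁻ t, ∫⁻ x, k t * g (x - t) ^ 4 := by
      rw [lintegral_lintegral_swap]
      exact ((hk.comp measurable_snd).mul
        ((hg.comp (measurable_fst.sub measurable_snd)).pow_const 4)).aemeasurable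
    _ = (∫⁻ t, k t) ^ 3 * ∫⁻ t, k t * ∫⁻ x, g x ^ 4 := by
      congr 1
      apply lintegral_congr
      intro t
      have hm : Measurable fun x => g (x - t) ^ 4 :=
        (hg.comp (measurable_id.sub_const t)).pow_const 4
      rw [lintegral_const_mul _ hm]
      congr 1
      exact lintegral_sub_right_eq_self (fun x => g x ^ 4) t
    _ = _ := by
      rw [lintegral_mul_const _ hk]; ring

/-- A multiplier given by a Schwartz function is bounded on `L⁴`. -/
lemma mult4 (f g : SchwartzMap E3 ℂ) :
    ∫⁻ x, ‖𝓕⁻ (fun ξ : E3 => f ξ * 𝓕 (fun y => g y) ξ) x‖ₑ ^ 4 ≤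
      (∫⁻ x, ‖𝓕⁻ (f : E3 → ℂ) x‖ₑ) ^ 4 * ∫⁻ x, ‖g x‖ₑ ^ 4 := by
  have key : ∀ x, 𝓕⁻ (fun ξ : E3 => f ξ * 𝓕 (fun y => g y) ξ) x =
      ∫ t, (𝓕⁻ f) t * g (x - t) := by
    intro x
    have h := SchwartzMap.convolution_apply (ContinuousLinearMap.mul ℂ ℂ) (𝓕⁻ f) g x
    have h2 : SchwartzMap.convolution (ContinuousLinearMap.mul ℂ ℂ) (𝓕⁻ f) g x
      = 𝓕⁻ (fun ξ : E3 => f ξ * 𝓕 (fun y => g y) ξ) x := by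
      have : SchwartzMap.convolution (ContinuousLinearMap.mul ℂ ℂ) (𝓕⁻ f) g =
        𝓕⁻ (𝓕 (SchwartzMap.convolution (ContinuousLinearMap.mul ℂ ℂ) (𝓕⁻ f) g)) := by simp
      rw [this, SchwartzMap.fourier_convolution, SchwartzMap.fourierInv_coe]
      refine congrFun (congrArg _ ?_) x
      funext ξ
      simp [SchwartzMap.fourier_coe]
    rw [← h2, h]
    simp [MeasureTheory.convolution]
  calc _ ≤ ∫⁻ x, (∫⁻ t, ‖(𝓕⁻ f) t‖ₑ * ‖g (x - t)‖ₑ) ^ 4 := by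
        apply lintegral_mono
        intro x
        simp only
        rw [key]
        gcongr
        refine (enorm_integral_le_lintegral_enorm _).trans_eq ?_
        simp_rw [enorm_mul]
    _ ≤ _ := by
        refine (young4 _ _ (𝓕⁻ f).continuous.enorm.measurable g.continuous.enorm.measurable).trans_eq ?_
        rw [SchwartzMap.fourierInv_coe]

lemma finv_scale (f : E3 → ℂ) (c : ℝ) (hc : 0 < c) :
    ∫⁻ x, ‖𝓕⁻ (fun ξ : E3 => f (c • ξ)) x‖ₑ = ∫⁻ x, ‖𝓕⁻ f x‖ₑ := by
  have h1 : ∀ x, 𝓕⁻ (fun ξ : E3 => f (c • ξ)) x = ((c ^ 3)⁻¹ : ℝ) • 𝓕⁻ f (c⁻¹ • x) := by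
    intro x
    rw [Real.fourierInv_eq, Real.fourierInv_eq]
    have := Measure.integral_comp_smul_of_nonneg (volume : Measure E3)
      (fun v : E3 => Real.fourierChar (inner ℝ v (c⁻¹ • x)) • f v) c (hR := hc.le)
    simp only [finrank_euclideanSpace, Fintype.card_fin] at this
    rw [← this]
    congr 1
    ext v
    rw [inner_smul_left, inner_smul_right]
    simp [hc.ne']
  simp_rw [h1, enorm_smul]
  have : ∫⁻ x : E3, ‖𝓕⁻ f (c⁻¹ • x)‖ₑ = ENNReal.ofReal (c ^ 3) * ∫⁻ x, ‖𝓕⁻ f x‖ₑ := by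
    refine ((Homeomorph.smulOfNeZero c⁻¹ (inv_ne_zero hc.ne')).measurableEmbedding.lintegral_map (μ := (volume : Measure E3)) (fun x : E3 => ‖𝓕⁻ f x‖ₑ)).symm.trans ?_
    change ∫⁻ x, _ ∂(Measure.map (fun x : E3 => c⁻¹ • x) volume) = _
    rw [Measure.map_addHaar_smul _ (inv_ne_zero hc.ne'), lintegral_smul_measure]
    simp [abs_of_pos hc]
  rw [lintegral_const_mul' _ _ (by simp), this, ← mul_assoc, Real.enorm_eq_ofReal (by positivity),
    ← ENNReal.ofReal_mul (by positivity), inv_mul_cancel₀ (by positivity)]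
  simp

lemma finv_add (f g : SchwartzMap E3 ℂ) (a : ℝ) :
    ∫⁻ x, ‖𝓕⁻ (fun ξ : E3 => f ξ + a * g ξ) x‖ₑ ≤
      (∫⁻ x, ‖𝓕⁻ (f : E3 → ℂ) x‖ₑ) + ‖a‖ₑ * ∫⁻ x, ‖𝓕⁻ (g : E3 → ℂ) x‖ₑ := by
  have : 𝓕⁻ (fun ξ : E3 => f ξ + a * g ξ) = fun x => (𝓕⁻ f) x + (a : ℂ) * (𝓕⁻ g) x := by
    have : (fun ξ : E3 => f ξ + a * g ξ) = ((f + (a : ℂ) • g : SchwartzMap E3 ℂ) : E3 → ℂ) := by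
      ext; simp
    rw [this, ← SchwartzMap.fourierInv_coe, FourierTransform.fourierInv_add,
      FourierTransform.fourierInv_smul]
    ext; simp
  rw [this]
  rw [← SchwartzMap.fourierInv_coe, ← SchwartzMap.fourierInv_coe,
    ← lintegral_const_mul' _ _ (by simp), ← lintegral_add_left (𝓕⁻ f).continuous.enorm.measurable]
  apply lintegral_mono
  intro x
  refine (enorm_add_le _ _).trans_eq ?_
  rw [enorm_mul, ← ofReal_norm (a : ℂ), Complex.norm_real, ofReal_norm]

lemma finv_ne_top (f : SchwartzMap E3 ℂ) : ∫⁻ x, ‖𝓕⁻ (f : E3 → ℂ) x‖ₑ ≠ ⊤ := by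
  rw [← SchwartzMap.fourierInv_coe]
  exact (𝓕⁻ f).integrable.2.ne

lemma pd_finv (F : E3 → ℂ) (hF : Integrable F) (hF' : Integrable fun ξ => ‖ξ‖ * ‖F ξ‖)
    (i : Fin 3) (x : E3) :
    pd (𝓕⁻ F) i x = 𝓕⁻ (fun ξ : E3 => (2 * π * Complex.I * (ξ i : ℝ)) * F ξ) x := by
  have h1 : 𝓕⁻ F = fun x => 𝓕 F (-x) := by ext x; rw [Real.fourierInv_eq_fourier_neg]
  have h2 := Real.hasFDerivAt_fourier hF hF' (-x)
  have h3 : HasFDerivAt (fun x => 𝓕 F (-x)) _ x := h2.comp x (hasFDerivAt_id x).neg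
  rw [pd, h1, h3.fderiv, Real.fourierInv_eq_fourier_neg]
  simp only [ContinuousLinearMap.comp_apply, neg_apply,
    ContinuousLinearMap.id_apply, map_neg]
  rw [Real.fourier_continuousLinearMap_apply, ]
  · rw [Real.fourier_eq, Real.fourier_eq, ← integral_neg]
    congr 1
    ext v
    simp [VectorFourier.fourierSMulRight_apply, e3, Circle.smul_def]
    rw [innerSL_apply_apply, EuclideanSpace.inner_single_right]
    simp
    ring
  · have : Integrable (fun v => ‖v‖ ^ 1 * ‖F v‖) := by simpa using hF'
    apply ((hF'.const_mul (2 * π * ‖innerSL ℝ (E := E3)‖))).mono'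
    · exact hF.1.fourierSMulRight
    · filter_upwards with v
      refine (VectorFourier.norm_fourierSMulRight_le _ _ _).trans_eq (by ring)

lemma plancherel_finv (f : SchwartzMap E3 ℂ) :
    ∫⁻ x, ‖𝓕⁻ (f : E3 → ℂ) x‖ₑ ^ 2 = ∫⁻ x, ‖f x‖ₑ ^ 2 := by
  have h := SchwartzMap.integral_norm_sq_fourier (𝓕⁻ f)
  rw [FourierTransform.fourier_fourierInv_eq] at h
  have e : ∀ u : SchwartzMap E3 ℂ, ∫⁻ x, ‖u x‖ₑ ^ 2 = ENNReal.ofReal (∫ x, ‖u x‖ ^ 2) := by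
    intro u
    rw [ofReal_integral_eq_lintegral_ofReal]
    · simp_rw [ENNReal.ofReal_pow (norm_nonneg _), ofReal_norm]
    · exact (u.memLp 2).integrable_norm_pow (by norm_num)
    · filter_upwards with x; positivity
  rw [← SchwartzMap.fourierInv_coe, e, e, h]

/-- A radial smooth bump, equal to `1` on the ball of radius `2`. -/
def chi : ContDiffBump (0 : E3) := ⟨2, 3, by norm_num, by norm_num⟩

lemma chi_one (x : E3) (hx : ‖x‖ ≤ 2) : chi x = 1 :=
  chi.one_of_mem_closedBall (by simpa [chi] using hx)

lemma eta_norm_contDiff (s : ℝ) (η : ℝ → ℝ) (hη : IsCutoff s η) :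
    ContDiff ℝ ∞ (fun ξ : E3 => η ‖ξ‖) := by
  obtain ⟨h1, -, -, h4, -⟩ := hη
  rw [contDiff_iff_contDiffAt]
  intro ξ
  by_cases h : ξ = 0
  · subst h
    have : (fun ξ : E3 => η ‖ξ‖) =ᶠ[nhds 0] fun _ => 1 := by
      filter_upwards [Metric.ball_mem_nhds (0 : E3) one_pos] with x hx
      exact h4 _ (by simpa using (mem_ball_zero_iff.1 hx).le)
    exact contDiffAt_const.congr_of_eventuallyEq this
  · exact h1.contDiffAt.comp ξ (contDiffAt_norm ℝ h)

/-- truncated symbol -/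
def Phi (η : ℝ → ℝ) (b c : ℝ) (ξ : E3) : ℂ := ((chi (b • ξ) * η ‖c • ξ‖ : ℝ) : ℂ)

lemma chi_comp_supp (b : ℝ) (hb : b ≠ 0) : HasCompactSupport (fun ξ : E3 => chi (b • ξ)) :=
  chi.hasCompactSupport.comp_smul hb

lemma Phi_supp (η : ℝ → ℝ) (b c : ℝ) (hb : b ≠ 0) : HasCompactSupport (Phi η b c) := by
  have : HasCompactSupport (fun ξ : E3 => chi (b • ξ) * η ‖c • ξ‖) :=
    (chi_comp_supp b hb).mul_right
  exact this.comp_left (g := fun r : ℝ => (r : ℂ)) (by simp)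

lemma chi_comp_contDiff (b : ℝ) : ContDiff ℝ ∞ (fun ξ : E3 => chi (b • ξ)) :=
  chi.contDiff.comp (contDiff_const_smul b)

lemma Phi_contDiff (s : ℝ) (η : ℝ → ℝ) (hη : IsCutoff s η) (b c : ℝ) :
    ContDiff ℝ ∞ (Phi η b c) :=
  Complex.ofRealCLM.contDiff.comp ((chi_comp_contDiff b).mul
    ((eta_norm_contDiff s η hη).comp (contDiff_const_smul c)))

def psi (η : ℝ → ℝ) (ξ : E3) : ℂ := Phi η 2⁻¹ 1 ξ - Phi η 1 1 ξ

lemma Phi_succ (s : ℝ) (η : ℝ → ℝ) (hη : IsCutoff s η) (J : ℕ) (ξ : E3) :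
    Phi η (2 ^ (J + 1))⁻¹ 1 ξ = Phi η (2 ^ J)⁻¹ 1 ξ +
      (((2 : ℝ) ^ (s - 1)) ^ J : ℝ) * psi η ((2 ^ J : ℝ)⁻¹ • ξ) := by
  obtain ⟨ζ, rfl⟩ : ∃ ζ : E3, ξ = (2 ^ J : ℝ) • ζ := ⟨(2 ^ J : ℝ)⁻¹ • ξ, by simp⟩
  have e1 : (2 ^ (J + 1) : ℝ)⁻¹ • (2 ^ J : ℝ) • ζ = (2 : ℝ)⁻¹ • ζ := by
    rw [smul_smul, pow_succ]; congr 1; field_simp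
  have e2 : (2 ^ J : ℝ)⁻¹ • (2 ^ J : ℝ) • ζ = ζ := by simp
  simp only [psi, Phi, e1, e2, one_smul]
  by_cases h : ‖ζ‖ ≤ 2
  · rw [chi_one _ h, chi_one ((2:ℝ)⁻¹ • ζ) (by rw [norm_smul]; norm_num; linarith)]
    simp
  · push Not at h
    have h2 : ‖(2 ^ J : ℝ) • ζ‖ = 2 ^ J * ‖ζ‖ := by simp [norm_smul]
    have h1 : (1 : ℝ) ≤ 2 ^ J := one_le_pow₀ (by norm_num)
    have : η ‖(2 ^ J : ℝ) • ζ‖ = ((2 : ℝ) ^ (s - 1)) ^ J * η ‖ζ‖ := by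
      rw [h2, hη.2.2.2.2 _ (by nlinarith), hη.2.2.2.2 _ h.le, Real.mul_rpow (by positivity) (by positivity)]
      congr 1
      rw [← Real.rpow_natCast, ← Real.rpow_natCast, ← Real.rpow_mul (by norm_num),
        ← Real.rpow_mul (by norm_num), mul_comm]
    rw [this]
    push_cast
    ring

lemma Phi_kernel_bound (s : ℝ) (hs1 : s < 1) (η : ℝ → ℝ) (hη : IsCutoff s η) :
    ∃ B : ℝ≥0∞, B ≠ ⊤ ∧ ∀ J : ℕ, ∫⁻ x, ‖𝓕⁻ (Phi η (2 ^ J)⁻¹ 1) x‖ₑ ≤ B := by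
  set q : ℝ := 2 ^ (s - 1) with hq
  have q0 : 0 < q := by positivity
  have q1 : q < 1 := Real.rpow_lt_one_of_one_lt_of_neg (by norm_num) (by linarith)
  have hpsi_s : HasCompactSupport (psi η) :=
    (Phi_supp η 2⁻¹ 1 (by norm_num)).sub (Phi_supp η 1 1 (by norm_num))
  have hpsi_c : ContDiff ℝ ∞ (psi η) := (Phi_contDiff s η hη _ _).sub (Phi_contDiff s η hη _ _)
  set P : SchwartzMap E3 ℂ := hpsi_s.toSchwartzMap hpsi_c with hP
  let S : ℕ → SchwartzMap E3 ℂ := fun J =>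
    (Phi_supp η (2 ^ J)⁻¹ 1 (by positivity)).toSchwartzMap (Phi_contDiff s η hη _ _)
  set L := ∫⁻ x, ‖𝓕⁻ (psi η) x‖ₑ with hL
  have hLt : L ≠ ⊤ := finv_ne_top P
  have step : ∀ J : ℕ, ∫⁻ x, ‖𝓕⁻ (Phi η (2 ^ (J + 1))⁻¹ 1) x‖ₑ ≤
      (∫⁻ x, ‖𝓕⁻ (Phi η (2 ^ J)⁻¹ 1) x‖ₑ) + ENNReal.ofReal q ^ J * L := by
    intro J
    have hJ : ((2 : ℝ) ^ J)⁻¹ ≠ 0 := by positivity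
    have hs' : HasCompactSupport (fun ξ : E3 => psi η ((2 ^ J : ℝ)⁻¹ • ξ)) :=
      hpsi_s.comp_smul hJ
    have hc' : ContDiff ℝ ∞ (fun ξ : E3 => psi η ((2 ^ J : ℝ)⁻¹ • ξ)) :=
      hpsi_c.comp (contDiff_const_smul _)
    have h := finv_add (S J) (hs'.toSchwartzMap hc') (q ^ J)
    have e : Phi η (2 ^ (J + 1))⁻¹ 1 = fun ξ => S J ξ + ((q ^ J : ℝ) : ℂ) *
        (hs'.toSchwartzMap hc') ξ := by
      funext ξ
      exact Phi_succ s η hη J ξ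
    rw [e]
    refine h.trans_eq ?_
    have e2 : ∫⁻ x, ‖𝓕⁻ ((hs'.toSchwartzMap hc' : SchwartzMap E3 ℂ) : E3 → ℂ) x‖ₑ = L :=
      finv_scale (psi η) _ (by positivity)
    rw [e2, Real.enorm_eq_ofReal (by positivity), ENNReal.ofReal_pow q0.le]
    rfl
  refine ⟨(∫⁻ x, ‖𝓕⁻ (Phi η (2 ^ 0)⁻¹ 1) x‖ₑ) + (1 - ENNReal.ofReal q)⁻¹ * L, ?_, ?_⟩
  · refine ENNReal.add_ne_top.2 ⟨finv_ne_top (S 0), ENNReal.mul_ne_top ?_ hLt⟩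
    rw [ENNReal.inv_ne_top]
    exact (tsub_pos_of_lt (by simpa using q1)).ne'
  · intro J
    rw [← ENNReal.tsum_geometric]
    have : ∀ J : ℕ, ∫⁻ x, ‖𝓕⁻ (Phi η (2 ^ J)⁻¹ 1) x‖ₑ ≤ (∫⁻ x, ‖𝓕⁻ (Phi η (2 ^ 0)⁻¹ 1) x‖ₑ) +
        (∑ j ∈ Finset.range J, ENNReal.ofReal q ^ j) * L := by
      intro J
      induction J with
      | zero => simp
      | succ J ih =>
        refine (step J).trans ?_
        rw [Finset.sum_range_succ, add_mul, ← add_assoc]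
        gcongr
    refine (this J).trans ?_
    gcongr
    exact ENNReal.sum_le_tsum _

lemma fatou_finv (F : E3 → ℂ) (FJ : ℕ → SchwartzMap E3 ℂ) (hF : Integrable F)
    (hle : ∀ J ξ, ‖FJ J ξ‖ ≤ ‖F ξ‖)
    (hlim : ∀ ξ, Tendsto (fun J => FJ J ξ) atTop (nhds (F ξ)))
    (p : ℕ) (M : ℝ≥0∞) (hM : ∀ J, ∫⁻ x, ‖𝓕⁻ (FJ J : E3 → ℂ) x‖ₑ ^ p ≤ M) :
    Measurable (𝓕⁻ F) ∧ ∫⁻ x, ‖𝓕⁻ F x‖ₑ ^ p ≤ M := by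
  have hc : ∀ J, Continuous (𝓕⁻ (FJ J : E3 → ℂ)) := fun J => by
    rw [← SchwartzMap.fourierInv_coe]; exact (𝓕⁻ (FJ J)).continuous
  have ht : ∀ x, Tendsto (fun J => 𝓕⁻ (FJ J : E3 → ℂ) x) atTop (nhds (𝓕⁻ F x)) := by
    intro x
    simp only [Real.fourierInv_eq]
    apply tendsto_integral_of_dominated_convergence (fun ξ => ‖F ξ‖)
    · intro J
      refine Continuous.aestronglyMeasurable ?_
      have := (FJ J).continuous
      fun_prop
    · exact hF.norm
    · intro J
      filter_upwards with ξ
      simpa using hle J ξ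
    · filter_upwards with ξ
      exact (hlim ξ).const_smul _
  refine ⟨measurable_of_tendsto_metrizable (fun J => (hc J).measurable) (tendsto_pi_nhds.2 ht), ?_⟩
  have e : ∀ x, ‖𝓕⁻ F x‖ₑ ^ p = liminf (fun J => ‖𝓕⁻ (FJ J : E3 → ℂ) x‖ₑ ^ p) atTop := by
    intro x
    exact (((ENNReal.continuous_pow p).tendsto _).comp ((ht x).enorm)).liminf_eq.symm
  simp_rw [e]
  refine (lintegral_liminf_le fun J => ((hc J).enorm.measurable.pow_const p)).trans ?_
  exact liminf_le_of_frequently_le' (Frequently.of_forall hM)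

lemma symbol_bound (s : ℝ) (hs : 1/2 < s) (hs1 : s < 1) (η : ℝ → ℝ) (hη : IsCutoff s η)
    (N : ℝ) (hN : 1 ≤ N) (r : ℝ) (hr : 0 ≤ r) :
    r ^ 2 * η (r / N) ^ 2 ≤ 4 * N ^ (2 * (1 - s)) * r ^ (2 * s) := by
  have hN0 : 0 < N := by linarith
  rcases hr.eq_or_lt with rfl | hr0
  · simp; positivity
  have hr2 : r ^ 2 = r ^ (2 * s) * r ^ (2 * (1 - s)) := by
    rw [← Real.rpow_add hr0, ← Real.rpow_natCast]; congr 1; push_cast; ring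
  rcases le_total (r / N) 2 with h | h
  · have h0 := hη.2.2.1 (r / N) (by positivity)
    have h1 : r ≤ 2 * N := by rwa [div_le_iff₀ hN0] at h
    calc r ^ 2 * η (r / N) ^ 2 ≤ r ^ 2 * 1 := by
          gcongr; exact pow_le_one₀ h0.1.le h0.2
      _ = r ^ (2 * s) * r ^ (2 * (1 - s)) := by rw [mul_one, hr2]
      _ ≤ r ^ (2 * s) * (2 * N) ^ (2 * (1 - s)) := by
          gcongr
      _ = r ^ (2 * s) * (2 ^ (2 * (1 - s)) * N ^ (2 * (1 - s))) := by
          rw [Real.mul_rpow (by norm_num) hN0.le]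
      _ ≤ r ^ (2 * s) * (2 ^ (2 : ℝ) * N ^ (2 * (1 - s))) := by
          gcongr
          · norm_num
          · linarith
      _ = _ := by norm_num; ring
  · rw [hη.2.2.2.2 _ h, hr2, Real.div_rpow hr0.le hN0.le, div_pow]
    have e1 : r ^ (2 * (1 - s)) * (r ^ (s - 1)) ^ 2 = 1 := by
      rw [← Real.rpow_natCast, ← Real.rpow_mul hr0.le, ← Real.rpow_add hr0]
      convert Real.rpow_zero r using 2
      push_cast; ring
    have e2 : ((N ^ (s - 1)) ^ 2)⁻¹ = N ^ (2 * (1 - s)) := by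
      rw [← Real.rpow_natCast, ← Real.rpow_mul hN0.le, ← Real.rpow_neg hN0.le]
      congr 1; push_cast; ring
    rw [div_eq_mul_inv, e2]
    calc _ = r ^ (2 * s) * (r ^ (2 * (1 - s)) * (r ^ (s - 1)) ^ 2) * N ^ (2 * (1 - s)) := by ring
      _ = 1 * N ^ (2 * (1 - s)) * r ^ (2 * s) := by rw [e1]; ring
      _ ≤ _ := by gcongr; norm_num

lemma sob_integrable (s : ℝ) (hs : 1/2 < s) (hs1 : s < 1) (G : SchwartzMap E3 ℂ) :
    Integrable (fun ξ : E3 => ‖ξ‖ ^ (2 * s) * ‖G ξ‖ ^ 2) := by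
  obtain ⟨M, hM⟩ : ∃ M : ℝ, ∀ ξ, ‖G ξ‖ ≤ M := by
    obtain ⟨M, hM⟩ := G.decay 0 0
    exact ⟨M, fun ξ => by simpa using hM.2 ξ⟩
  have hi := ((G.integrable_pow_mul volume 0).add (G.integrable_pow_mul volume 2)).const_mul M
  refine hi.mono' ?_ ?_
  · refine Continuous.aestronglyMeasurable ?_
    have := G.continuous
    exact (continuous_norm.rpow_const (fun _ => Or.inr (by linarith))).mul (this.norm.pow 2)
  · filter_upwards with ξ
    rw [Real.norm_of_nonneg (by positivity)]
    have h1 : ‖ξ‖ ^ (2 * s) ≤ 1 + ‖ξ‖ ^ 2 := by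
      rcases le_total ‖ξ‖ 1 with h | h
      · have := Real.rpow_le_one (norm_nonneg ξ) h (z := 2 * s) (by linarith)
        nlinarith [sq_nonneg ‖ξ‖]
      · have := Real.rpow_le_rpow_of_exponent_le h (show 2 * s ≤ (2 : ℕ) by push_cast; linarith)
        rw [Real.rpow_natCast] at this
        linarith
    have h2 := hM ξ
    have h3 := norm_nonneg (G ξ)
    calc ‖ξ‖ ^ (2 * s) * ‖G ξ‖ ^ 2 ≤ (1 + ‖ξ‖ ^ 2) * (M * ‖G ξ‖) := by
          gcongr
          rw [sq]; gcongr
      _ = _ := by simp; ring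

lemma lint_ofReal_sq (h : E3 → ℂ) (p : ℕ) (hh : Integrable fun x => ‖h x‖ ^ p) :
    ∫⁻ x, ‖h x‖ₑ ^ p = ENNReal.ofReal (∫ x, ‖h x‖ ^ p) := by
  rw [ofReal_integral_eq_lintegral_ofReal hh]
  · simp_rw [ENNReal.ofReal_pow (norm_nonneg _), ofReal_norm]
  · filter_upwards with x; positivity

/-- The truncated symbols converge. -/
lemma Phi_eventually (η : ℝ → ℝ) (c : ℝ) (ξ : E3) :
    ∀ᶠ J : ℕ in atTop, Phi η ((2 ^ J)⁻¹ * c) c ξ = (η ‖c • ξ‖ : ℂ) := by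
  have : Tendsto (fun J : ℕ => ‖((2 ^ J : ℝ)⁻¹ * c) • ξ‖) atTop (nhds 0) := by
    have h := (tendsto_inv_atTop_zero.comp (tendsto_pow_atTop_atTop_of_one_lt
      (one_lt_two (α := ℝ)))).mul_const (|c| * ‖ξ‖)
    rw [zero_mul] at h
    refine h.congr fun J => ?_
    simp [norm_smul, mul_assoc]
  filter_upwards [this.eventually (gt_mem_nhds (show (0:ℝ) < 2 by norm_num))] with J hJ
  simp [Phi, chi_one _ hJ.le]

lemma Phi_norm_le (η : ℝ → ℝ) (b c : ℝ) (ξ : E3) :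
    ‖Phi η b c ξ‖ ≤ ‖(η ‖c • ξ‖ : ℂ)‖ := by
  simp only [Phi, Complex.ofReal_mul, norm_mul, Complex.norm_real]
  have h1 : ‖chi (b • ξ)‖ ≤ 1 := by
    rw [Real.norm_of_nonneg chi.nonneg]; exact chi.le_one
  exact mul_le_of_le_one_left (norm_nonneg _) h1

theorem energy_I_upper_bound
    (s : ℝ) (hs : 1/2 < s) (hs1 : s < 1) (η : ℝ → ℝ) (hη : IsCutoff s η) :
    ∃ C > (0:ℝ), ∀ N ≥ (1:ℝ), ∀ g : SchwartzMap E3 ℂ,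
      energyE (Iop η N (fun x => g x))
        ≤ C * (N ^ (2 * (1 - s)) * sobSq s (fun x => g x) + ∫ x : E3, ‖g x‖ ^ 4) := by
  obtain ⟨B, hB, hBJ⟩ := Phi_kernel_bound s hs1 η hη
  refine ⟨24 * π ^ 2 + B.toReal ^ 4, by positivity, fun N hN g => ?_⟩
  have hN0 : 0 < N := by linarith
  set c := N⁻¹ with hc
  have hc0 : 0 < c := by positivity
  set G : SchwartzMap E3 ℂ := 𝓕 g with hG
  have hGc : 𝓕 (fun x => g x) = (G : E3 → ℂ) := rfl
  set F : E3 → ℂ := fun ξ => (η ‖c • ξ‖ : ℂ) * G ξ with hF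
  have hI : Iop η N (fun x => g x) = 𝓕⁻ F := by
    funext x
    simp only [Iop]
    refine congrFun (congrArg _ ?_) x
    funext ξ
    simp only [hGc, hF]
    rw [norm_smul, Real.norm_of_nonneg hc0.le, hc, div_eq_inv_mul]
  have hη1 : ∀ ξ : E3, ‖(η ‖c • ξ‖ : ℂ)‖ ≤ 1 := fun ξ => by
    have := hη.2.2.1 ‖c • ξ‖ (norm_nonneg _)
    rw [Complex.norm_real, Real.norm_of_nonneg this.1.le]; exact this.2
  have hηc : Continuous (fun ξ : E3 => (η ‖c • ξ‖ : ℂ)) := by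
    have := hη.1.continuous
    fun_prop
  have hFc : Continuous F := hηc.mul G.continuous
  have hFle : ∀ ξ, ‖F ξ‖ ≤ ‖G ξ‖ := fun ξ => by
    rw [hF, norm_mul]; exact mul_le_of_le_one_left (norm_nonneg _) (hη1 ξ)
  have hFi : Integrable F := G.integrable.mono hFc.aestronglyMeasurable (.of_forall hFle)
  have hFi' : Integrable (fun ξ => ‖ξ‖ * ‖F ξ‖) := by
    refine (G.integrable_pow_mul volume 1).mono' (by fun_prop) (.of_forall fun ξ => ?_)
    rw [Real.norm_of_nonneg (by positivity), pow_one]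
    have := hFle ξ
    gcongr
  -- truncations
  have hb : ∀ J : ℕ, (2 ^ J : ℝ)⁻¹ * c ≠ 0 := fun J => by positivity
  let f : ℕ → SchwartzMap E3 ℂ := fun J =>
    (Phi_supp η ((2 ^ J)⁻¹ * c) c (hb J)).toSchwartzMap (Phi_contDiff s η hη _ _)
  have hGs : ContDiff ℝ ∞ (G : E3 → ℂ) := G.smooth'
  let FJ : ℕ → SchwartzMap E3 ℂ := fun J =>
    HasCompactSupport.toSchwartzMap (f := fun ξ => Phi η ((2 ^ J)⁻¹ * c) c ξ * G ξ)
      (Phi_supp η ((2 ^ J)⁻¹ * c) c (hb J)).mul_right ((Phi_contDiff s η hη _ _).mul hGs)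
  have hFJ : ∀ J ξ, FJ J ξ = Phi η ((2 ^ J)⁻¹ * c) c ξ * G ξ := fun J ξ => rfl
  have hcoord : ∀ i : Fin 3, ContDiff ℝ ∞ (fun ξ : E3 => (2 * π * Complex.I * (ξ i : ℝ) : ℂ)) := by
    intro i
    refine contDiff_const.mul (Complex.ofRealCLM.contDiff.comp ?_)
    exact (EuclideanSpace.proj (𝕜 := ℝ) i).contDiff
  let DJ : Fin 3 → ℕ → SchwartzMap E3 ℂ := fun i J =>
    HasCompactSupport.toSchwartzMap
      (f := fun ξ : E3 => (2 * π * Complex.I * (ξ i : ℝ)) * (Phi η ((2 ^ J)⁻¹ * c) c ξ * G ξ))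
      (HasCompactSupport.mul_left (Phi_supp η ((2 ^ J)⁻¹ * c) c (hb J)).mul_right)
      ((hcoord i).mul ((Phi_contDiff s η hη _ _).mul hGs))
  have hDJ : ∀ i J ξ, DJ i J ξ =
    (2 * π * Complex.I * (ξ i : ℝ)) * FJ J ξ := fun i J ξ => rfl
  have hFJle : ∀ J ξ, ‖FJ J ξ‖ ≤ ‖F ξ‖ := fun J ξ => by
    rw [hFJ, hF, norm_mul, norm_mul]
    gcongr
    exact Phi_norm_le η _ _ _
  have hFJlim : ∀ ξ, Tendsto (fun J => FJ J ξ) atTop (nhds (F ξ)) := fun ξ => by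
    refine tendsto_const_nhds.congr' ?_
    filter_upwards [Phi_eventually η c ξ] with J hJ
    rw [hFJ, hJ]
  -- the L⁴ bound
  have h4 := fatou_finv F FJ hFi hFJle hFJlim 4 (B ^ 4 * ∫⁻ x, ‖g x‖ₑ ^ 4) (fun J => by
    refine (mult4 (f J) g).trans ?_
    gcongr
    refine le_trans (le_of_eq ?_) (hBJ J)
    rw [← finv_scale (Phi η (2 ^ J)⁻¹ 1) c hc0]
    have : ((f J : SchwartzMap E3 ℂ) : E3 → ℂ) = fun ξ => Phi η (2 ^ J)⁻¹ 1 (c • ξ) := by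
      funext ξ
      change Phi η ((2 ^ J)⁻¹ * c) c ξ = _
      simp [Phi, smul_smul]
    rw [this])
  -- the gradient bound
  set S : ℝ := sobSq s (fun x => g x) with hS
  have hSi := sob_integrable s hs hs1 G
  have hcoordle : ∀ (i : Fin 3) (ξ : E3),
      ‖(2 * π * Complex.I * (ξ i : ℝ) : ℂ)‖ ≤ 2 * π * ‖ξ‖ := by
    intro i ξ
    have : ‖ξ i‖ ≤ ‖ξ‖ := PiLp.norm_apply_le ξ i
    simp only [norm_mul, Complex.norm_real, Complex.norm_I, mul_one, Complex.norm_ofNat]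
    rw [Real.norm_of_nonneg Real.pi_pos.le]
    gcongr
  have hDbound : ∀ (i : Fin 3) (J : ℕ), ∫⁻ x, ‖𝓕⁻ (DJ i J : E3 → ℂ) x‖ₑ ^ 2 ≤
      ENNReal.ofReal (16 * π ^ 2 * N ^ (2 * (1 - s)) * S) := by
    intro i J
    rw [plancherel_finv, hS, sobSq, ← integral_const_mul, ofReal_integral_eq_lintegral_ofReal]
    · apply lintegral_mono
      intro ξ
      simp only
      rw [← ofReal_norm, ← ENNReal.ofReal_pow (norm_nonneg _)]
      apply ENNReal.ofReal_le_ofReal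
      rw [hDJ, norm_mul, mul_pow, hGc]
      have h1 := hFJle J ξ
      have h2 := hcoordle i ξ
      have h3 := symbol_bound s hs hs1 η hη N hN ‖ξ‖ (norm_nonneg _)
      have h5 : ‖F ξ‖ = ‖η (‖ξ‖ / N)‖ * ‖G ξ‖ := by
        rw [hF, norm_mul, Complex.norm_real, norm_smul, Real.norm_of_nonneg hc0.le, hc,
          div_eq_inv_mul]
      calc _ ≤ (2 * π * ‖ξ‖) ^ 2 * ‖F ξ‖ ^ 2 := by gcongr
        _ = 4 * π ^ 2 * (‖ξ‖ ^ 2 * η (‖ξ‖ / N) ^ 2) * ‖G ξ‖ ^ 2 := by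
          rw [h5, mul_pow ‖η (‖ξ‖ / N)‖, Real.norm_eq_abs, sq_abs]; ring
        _ ≤ 4 * π ^ 2 * (4 * N ^ (2 * (1 - s)) * ‖ξ‖ ^ (2 * s)) * ‖G ξ‖ ^ 2 := by gcongr
        _ = _ := by ring
    · exact hSi.const_mul _
    · filter_upwards with ξ
      positivity
  have hD : ∀ i : Fin 3, Measurable (pd (𝓕⁻ F) i) ∧ ∫⁻ x, ‖pd (𝓕⁻ F) i x‖ₑ ^ 2 ≤
      ENNReal.ofReal (16 * π ^ 2 * N ^ (2 * (1 - s)) * S) := by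
    intro i
    have e : pd (𝓕⁻ F) i = 𝓕⁻ (fun ξ : E3 => (2 * π * Complex.I * (ξ i : ℝ)) * F ξ) := by
      funext x; exact pd_finv F hFi hFi' i x
    rw [e]
    refine fatou_finv _ (DJ i) ?_ ?_ ?_ 2 _ (hDbound i)
    · refine (hFi'.const_mul (2 * π)).mono' ?_ ?_
      · exact ((hcoord i).continuous.mul hFc).aestronglyMeasurable
      · filter_upwards with ξ
        rw [norm_mul, ← mul_assoc]
        gcongr
        exact hcoordle i ξ
    · intro J ξ
      rw [hDJ, norm_mul (2 * π * Complex.I * (ξ i : ℝ) : ℂ) (FJ J ξ),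
        norm_mul (2 * π * Complex.I * (ξ i : ℝ) : ℂ) (F ξ)]
      exact mul_le_mul_of_nonneg_left (hFJle J ξ)
        (norm_nonneg (2 * π * Complex.I * (ξ i : ℝ) : ℂ))
    · intro ξ
      exact (hFJlim ξ).const_mul _
  -- assembling
  have hS0 : 0 ≤ S := integral_nonneg fun ξ => by positivity
  have hg4 : Integrable (fun x => ‖g x‖ ^ 4) := (g.memLp 4).integrable_norm_pow (by norm_num)
  set Q : ℝ := ∫ x, ‖g x‖ ^ 4 with hQ
  have hQ0 : 0 ≤ Q := integral_nonneg fun ξ => by positivity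
  have h4' : ∫⁻ x, ‖𝓕⁻ F x‖ₑ ^ 4 ≤ ENNReal.ofReal (B.toReal ^ 4 * Q) := by
    refine h4.2.trans_eq ?_
    rw [lint_ofReal_sq _ 4 hg4, ENNReal.ofReal_mul (by positivity),
      ENNReal.ofReal_pow (by positivity), ENNReal.ofReal_toReal hB]
  rw [hI, energyE]
  set A : ℝ := 16 * π ^ 2 * N ^ (2 * (1 - s)) * S with hA
  have hA0 : 0 ≤ A := by positivity
  have hm2 : ∀ i, Measurable fun x => ‖pd (𝓕⁻ F) i x‖ₑ ^ 2 := fun i => (hD i).1.enorm.pow_const 2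
  have hm4 : Measurable fun x => ‖𝓕⁻ F x‖ₑ ^ 4 := h4.1.enorm.pow_const 4
  have hpt : ∀ x, ENNReal.ofReal ((1/2) * (∑ i : Fin 3, Complex.normSq (pd (𝓕⁻ F) i x)) +
      (1/4) * ‖𝓕⁻ F x‖ ^ 4) = ENNReal.ofReal (1/2) * (∑ i : Fin 3, ‖pd (𝓕⁻ F) i x‖ₑ ^ 2) +
      ENNReal.ofReal (1/4) * ‖𝓕⁻ F x‖ₑ ^ 4 := by
    intro x
    rw [ENNReal.ofReal_add (mul_nonneg (by norm_num) (Finset.sum_nonneg fun i _ =>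
      Complex.normSq_nonneg _)) (by positivity), ENNReal.ofReal_mul (by norm_num),
      ENNReal.ofReal_mul (by norm_num), ENNReal.ofReal_sum_of_nonneg (fun i _ =>
      Complex.normSq_nonneg _), ENNReal.ofReal_pow (norm_nonneg _), ofReal_norm]
    simp_rw [Complex.normSq_eq_norm_sq, ENNReal.ofReal_pow (norm_nonneg _), ofReal_norm]
  have htot : ∫⁻ x, ENNReal.ofReal ((1/2) * (∑ i : Fin 3, Complex.normSq (pd (𝓕⁻ F) i x)) +
      (1/4) * ‖𝓕⁻ F x‖ ^ 4) ≤ ENNReal.ofReal ((1/2) * (3 * A) + (1/4) * (B.toReal ^ 4 * Q)) := by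
    simp_rw [hpt]
    rw [lintegral_add_right _ (hm4.const_mul _), lintegral_const_mul _ hm4,
      lintegral_const_mul _ (Finset.measurable_sum _ fun i _ => hm2 i),
      lintegral_finsetSum _ fun i _ => hm2 i,
      ENNReal.ofReal_add (by positivity) (by positivity), ENNReal.ofReal_mul (by norm_num),
      ENNReal.ofReal_mul (p := 1/4) (by norm_num)]
    gcongr
    calc _ ≤ ∑ i : Fin 3, ENNReal.ofReal A := Finset.sum_le_sum fun i _ => (hD i).2
      _ = _ := by
        rw [ENNReal.ofReal_mul (p := 3) (by norm_num)]; simp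
  have hfin : ∫ x : E3, (1/2) * (∑ i : Fin 3, Complex.normSq (pd (𝓕⁻ F) i x)) +
      (1/4) * ‖𝓕⁻ F x‖ ^ 4 ≤ (1/2) * (3 * A) + (1/4) * (B.toReal ^ 4 * Q) := by
    have hnn : ∀ x, 0 ≤ (1/2) * (∑ i : Fin 3, Complex.normSq (pd (𝓕⁻ F) i x)) +
        (1/4) * ‖𝓕⁻ F x‖ ^ 4 := fun x => add_nonneg (mul_nonneg (by norm_num)
          (Finset.sum_nonneg fun i _ => Complex.normSq_nonneg _)) (by positivity)
    rw [integral_eq_lintegral_of_nonneg_ae (.of_forall hnn)]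
    · exact ENNReal.toReal_le_of_le_ofReal (by positivity) htot
    · refine Measurable.aestronglyMeasurable ?_
      refine Measurable.add (Measurable.const_mul (Finset.measurable_sum _ fun i _ => ?_) _)
        ((h4.1.norm.pow_const 4).const_mul _)
      simp_rw [Complex.normSq_eq_norm_sq]
      exact (hD i).1.norm.pow_const 2
  refine hfin.trans ?_
  have hX : 0 ≤ N ^ (2 * (1 - s)) * S := by positivity
  have hb4 : 0 ≤ B.toReal ^ 4 := by positivity
  have : A = 16 * π ^ 2 * (N ^ (2 * (1 - s)) * S) := by rw [hA]; ring
  rw [this]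
  nlinarith [mul_nonneg hb4 hX, mul_nonneg hb4 hQ0, mul_nonneg (sq_nonneg π) hQ0]
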